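/- arXiv:1904.04064 — 5 statements merged into one kernel-verified Lean document; each statement's English description precedes it below -/
import Mathlib

section
/- For any two Pythagorean fuzzy numbers N, M ∈ L, N ≤_(SF,AF) M if and only if N ≤_(ES,m) M. -/
/-- The set `L` of Pythagorean fuzzy numbers, as a predicate on pairs of reals. -/
def IsPFN (N : ℝ × ℝ) : Prop :=
  N.1 ∈ Set.Icc (0:ℝ) 1 ∧ N.2 ∈ Set.Icc (0:ℝ) 1 ∧ N.1^2 + N.2^2 ≤ 1

/-- The score function. -/
def SF (N : ℝ × ℝ) : ℝ := N.1^2 - N.2^2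

/-- The accuracy function. -/
def AF (N : ℝ × ℝ) : ℝ := N.1^2 + N.2^2

/-- The expectation score function. -/
noncomputable def ES (N : ℝ × ℝ) : ℝ := (N.1^2 - N.2^2 + 1) / 2

/-- The relation `≤_(SF,AF)`. -/
def leSFAF (N M : ℝ × ℝ) : Prop := SF N < SF M ∨ (SF N = SF M ∧ AF N ≤ AF M)

/-- The relation `≤_(ES,m)`. -/
noncomputable def leESm (N M : ℝ × ℝ) : Prop := ES N < ES M ∨ (ES N = ES M ∧ N.1 ≤ M.1)

/-- `N ≤_(SF,AF) M` iff `N ≤_(ES,m) M` for Pythagorean fuzzy numbers. -/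
theorem leSFAF_iff_leESm (N M : ℝ × ℝ) (hN : IsPFN N) (hM : IsPFN M) :
    leSFAF N M ↔ leESm N M := by
  have hN0 : 0 ≤ N.1 := hN.1.1
  have hM0 : 0 ≤ M.1 := hM.1.1
  have key : N.1 ^ 2 ≤ M.1 ^ 2 ↔ N.1 ≤ M.1 := sq_le_sq₀ hN0 hM0
  unfold leSFAF leESm SF AF ES
  rw [← key]
  constructor
  · rintro (h | ⟨h, h'⟩)
    · left; linarith
    · right; constructor <;> linarith
  · rintro (h | ⟨h, h'⟩)
    · left; linarith
    · right; constructor <;> linarith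
end

section
/- For Pythagorean fuzzy numbers M = (m_M, n_M), N = (m_N, n_N) in L and any real α > 0, scalar multiplication distributes over Pythagorean addition: α·(M +_P N) = (α·M) +_P (α·N), i.e. the two pairs of real numbers agree componentwise. -/
/-- Pythagorean addition `M +_P N`. -/
noncomputable def pfAdd (M N : ℝ × ℝ) : ℝ × ℝ :=
  (Real.sqrt (M.1^2 + N.1^2 - M.1^2 * N.1^2), M.2 * N.2)

/-- Scalar multiplication `α · N` of a Pythagorean fuzzy number (real exponents). -/
noncomputable def pfSmul (α : ℝ) (N : ℝ × ℝ) : ℝ × ℝ :=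
  (Real.sqrt (1 - (1 - N.1^2) ^ α), N.2 ^ α)

/-- Scalar multiplication distributes over Pythagorean addition. -/
theorem pfSmul_pfAdd (M N : ℝ × ℝ) (hM : IsPFN M) (hN : IsPFN N) (α : ℝ) (hα : 0 < α) :
    pfSmul α (pfAdd M N) = pfAdd (pfSmul α M) (pfSmul α N) := by
  obtain ⟨⟨hM0, hM1⟩, ⟨hM2, -⟩, -⟩ := hM
  obtain ⟨⟨hN0, hN1⟩, ⟨hN2, -⟩, -⟩ := hN
  have a0 : 0 ≤ 1 - M.1 ^ 2 := by nlinarith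
  have b0 : 0 ≤ 1 - N.1 ^ 2 := by nlinarith
  have a1 : (1 - M.1 ^ 2) ^ α ≤ 1 := Real.rpow_le_one a0 (by nlinarith) hα.le
  have b1 : (1 - N.1 ^ 2) ^ α ≤ 1 := Real.rpow_le_one b0 (by nlinarith) hα.le
  have hs : 0 ≤ M.1 ^ 2 + N.1 ^ 2 - M.1 ^ 2 * N.1 ^ 2 := by
    nlinarith [mul_nonneg (sq_nonneg M.1) b0, sq_nonneg N.1]
  unfold pfSmul pfAdd
  refine Prod.ext ?_ ?_
  · simp only
    rw [Real.sq_sqrt hs, Real.sq_sqrt (by linarith), Real.sq_sqrt (by linarith)]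
    have e : 1 - (M.1 ^ 2 + N.1 ^ 2 - M.1 ^ 2 * N.1 ^ 2) = (1 - M.1 ^ 2) * (1 - N.1 ^ 2) := by
      ring
    rw [e, Real.mul_rpow a0 b0]
    congr 1
    ring
  · exact Real.mul_rpow hM2 hN2
end

section
/- Pythagorean addition is monotone with respect to the order ≤_(m,ES): for Pythagorean fuzzy numbers M, N, K ∈ L, if N ≤_(m,ES) K then M +_P N ≤_(m,ES) M +_P K. -/
/-- The relation `≤_(m,ES)` on `L`. -/
noncomputable def leME (N M : ℝ × ℝ) : Prop :=
  N.1 < M.1 ∨ (N.1 = M.1 ∧ ES N ≤ ES M)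

/-- Pythagorean addition is monotone with respect to `≤_(m,ES)`. -/
theorem pfAdd_mono (M N K : ℝ × ℝ) (hM : IsPFN M) (hN : IsPFN N) (hK : IsPFN K)
    (h : leME N K) : leME (pfAdd M N) (pfAdd M K) := by
  obtain ⟨a, b⟩ := M
  obtain ⟨c, d⟩ := N
  obtain ⟨e, f⟩ := K
  obtain ⟨⟨ha0, ha1⟩, ⟨hb0, hb1⟩, hab⟩ := hM
  obtain ⟨⟨hc0, hc1⟩, ⟨hd0, hd1⟩, hcd⟩ := hN
  obtain ⟨⟨he0, he1⟩, ⟨hf0, hf1⟩, hef⟩ := hK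
  simp only [leME, ES, pfAdd] at *
  rcases h with h | ⟨h, hES⟩
  · rcases ha1.lt_or_eq with ha | ha
    · left
      have h1 : a ^ 2 < 1 := by nlinarith
      have h2 : c ^ 2 < e ^ 2 := by nlinarith
      apply Real.sqrt_lt_sqrt
      · nlinarith [sq_nonneg a, sq_nonneg c]
      · nlinarith [mul_pos (sub_pos.2 h1) (sub_pos.2 h2)]
    · right
      subst ha
      have hb : b = 0 := by nlinarith
      subst hb
      simp
  · right
    subst h
    refine ⟨rfl, ?_⟩
    have h2 : f ^ 2 ≤ d ^ 2 := by linarith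
    nlinarith [mul_le_mul_of_nonneg_left h2 (sq_nonneg b)]
end

section
/- Scalar multiplication of Pythagorean fuzzy numbers is monotone with respect to the order ≤_(m,ES): for M, N ∈ L and any real α > 0, if M ≤_(m,ES) N then α·M ≤_(m,ES) α·N. -/
/-- Scalar multiplication is monotone with respect to `≤_(m,ES)`. -/
theorem pfSmul_mono (M N : ℝ × ℝ) (hM : IsPFN M) (hN : IsPFN N) (α : ℝ) (hα : 0 < α)
    (h : leME M N) : leME (pfSmul α M) (pfSmul α N) := by
  obtain ⟨⟨hm0, hm1⟩, ⟨hn0, hn1⟩, hM2⟩ := hM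
  obtain ⟨⟨hp0, hp1⟩, ⟨hq0, hq1⟩, hN2⟩ := hN
  rcases h with h | ⟨h1, h2⟩
  · left
    simp only [pfSmul]
    have hlt : (1 - N.1 ^ 2) ^ α < (1 - M.1 ^ 2) ^ α :=
      Real.rpow_lt_rpow (by nlinarith) (by nlinarith) hα
    have hle : (1 - M.1 ^ 2) ^ α ≤ 1 :=
      Real.rpow_le_one (by nlinarith) (by nlinarith) hα.le
    exact Real.sqrt_lt_sqrt (by linarith) (by linarith)
  · right
    refine ⟨by simp only [pfSmul, h1], ?_⟩
    simp only [ES, pfSmul, h1] at h2 ⊢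
    have hle : N.2 ≤ M.2 := by
      exact abs_le_of_sq_le_sq' (by linarith) hn0 |>.2
    have hr : N.2 ^ α ≤ M.2 ^ α := Real.rpow_le_rpow hq0 hle hα.le
    have hs : (N.2 ^ α) ^ 2 ≤ (M.2 ^ α) ^ 2 :=
      pow_le_pow_left₀ (Real.rpow_nonneg hq0 α) hr 2
    linarith
end

section
/- Scalar multiplication of a fixed Pythagorean fuzzy number is monotone in the scalar with respect to the order ≤_(m,ES): for M ∈ L and reals 0 < α₁ ≤ α₂, one has α₁·M ≤_(m,ES) α₂·M. -/
/-- Scalar multiplication of a fixed PFN is monotone in the scalar w.r.t. `≤_(m,ES)`. -/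
theorem pfSmul_mono_scalar (M : ℝ × ℝ) (hM : IsPFN M) (α₁ α₂ : ℝ) (h₁ : 0 < α₁)
    (h₁₂ : α₁ ≤ α₂) : leME (pfSmul α₁ M) (pfSmul α₂ M) := by
  obtain ⟨⟨hm0, hm1⟩, ⟨hn0, hn1⟩, _⟩ := hM
  have hb0 : 0 ≤ 1 - M.1 ^ 2 := by nlinarith
  have hb1 : 1 - M.1 ^ 2 ≤ 1 := by nlinarith [sq_nonneg M.1]
  have hA := Real.rpow_le_rpow_of_exponent_ge' hb0 hb1 h₁.le h₁₂
  have hB := Real.rpow_le_rpow_of_exponent_ge' hn0 hn1 h₁.le h₁₂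
  have hm : (pfSmul α₁ M).1 ≤ (pfSmul α₂ M).1 := by
    apply Real.sqrt_le_sqrt
    linarith
  rcases hm.lt_or_eq with h | h
  · exact Or.inl h
  · refine Or.inr ⟨h, ?_⟩
    have hsq : (pfSmul α₂ M).2 ^ 2 ≤ (pfSmul α₁ M).2 ^ 2 :=
      pow_le_pow_left₀ (Real.rpow_nonneg hn0 α₂) hB 2
    unfold ES
    rw [h]
    linarith
end
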